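/- Let R be a commutative ring, let A be an n×n matrix over R, let m = 4s + p with integers s ≥ 2 and p ≥ 0, write p = t·s + r with t = ⌊p/s⌋ and r = p mod s (so s > r ≥ 0), and let b_0, …, b_m ∈ R. Suppose Y is an n×n matrix over R satisfying Y = Σ_{i=0}^{4s} b_{p+i} A^i. Then the nested scheme z_{1ps}(A) = (⋯((Y·A^s + Σ_{i=1}^{s} b_{p−i} A^{s−i})·A^s + Σ_{i=1}^{s} b_{p−s−i} A^{s−i})·A^s + ⋯ + Σ_{i=1}^{s} b_{p−(t−1)s−i} A^{s−i})·A^r + Σ_{j=0}^{r−1} b_j A^j, in which the multiplication by A^s is applied t times followed by one multiplication by A^r (omitted when r = 0), satisfies z_{1ps}(A) = Σ_{i=0}^{m} b_i A^i. -/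

import Mathlib

/-- The outer nesting of the `z_{1ps}` scheme: `zNest A b p s Y ℓ` is the value after
`ℓ` multiplications by `A^s`, starting from the inner evaluation `Y`; each level adds
`Σ_{i=1}^{s} b_{p − ℓs − i} A^{s−i}` after multiplying by `A^s`. -/
def zNest {R : Type*} [CommRing R] {n : ℕ} (A : Matrix (Fin n) (Fin n) R)
    (b : ℕ → R) (p s : ℕ) (Y : Matrix (Fin n) (Fin n) R) :
    ℕ → Matrix (Fin n) (Fin n) R
  | 0 => Y
  | ℓ + 1 => zNest A b p s Y ℓ * A ^ s +
      ∑ i ∈ Finset.Icc 1 s, b (p - ℓ * s - i) • A ^ (s - i)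

/-! In terms of the tails `T q = ∑_{i ≤ m - q} b_{q+i} A^i`, one nesting step is
`T (q + s) * A^s + ∑_{i < s} b_{q+i} A^i = T q`. Starting from `Y = T p`, the `t` steps of width
`s` lead to `T (p - t s) = T r`, and the last step, of width `r`, leads to `T 0`. -/

theorem sum_range_smul_pow_mul_pow_add {R S : Type*} [Semiring S] [SMul R S]
    [IsScalarTower R S S] (a : S) (b : ℕ → R) (q k N : ℕ) :
    (∑ i ∈ Finset.range N, b (q + k + i) • a ^ i) * a ^ k +
        ∑ i ∈ Finset.range k, b (q + i) • a ^ i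
      = ∑ i ∈ Finset.range (k + N), b (q + i) • a ^ i := by
  have shifted : (∑ i ∈ Finset.range N, b (q + k + i) • a ^ i) * a ^ k =
      ∑ i ∈ Finset.range N, b (q + (k + i)) • a ^ (k + i) := by
    simp only [Finset.sum_mul, smul_mul_assoc, ← pow_add, add_assoc, add_comm k]
  rw [shifted, Finset.sum_range_add, add_comm]

theorem sum_Icc_one_sub {M : Type*} [AddCommMonoid M] (f : ℕ → M) (s : ℕ) :
    ∑ i ∈ Finset.Icc 1 s, f (s - i) = ∑ i ∈ Finset.range s, f i := by
  rw [← Finset.Ico_add_one_right_eq_Icc, Finset.sum_Ico_reflect f 1 le_rfl, Finset.range_eq_Ico]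
  simp only [Nat.sub_self, Nat.add_sub_cancel]

section zNest

variable {R : Type*} [CommRing R] {n : ℕ} (A : Matrix (Fin n) (Fin n) R) (b : ℕ → R)

theorem zNest_succ_eq_add_sum_range (q s l : ℕ) (Y : Matrix (Fin n) (Fin n) R) :
    zNest A b (q + (l + 1) * s) s Y (l + 1) =
      zNest A b (q + (l + 1) * s) s Y l * A ^ s + ∑ i ∈ Finset.range s, b (q + i) • A ^ i := by
  have offset : q + (l + 1) * s - l * s = q + s := by grind
  rw [zNest, offset, ← sum_Icc_one_sub]
  congr 1
  refine Finset.sum_congr rfl fun i hi => ?_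
  rw [Nat.add_sub_assoc (Finset.mem_Icc.mp hi).2]

theorem zNest_sum_range (q s l N : ℕ) :
    zNest A b (q + l * s) s (∑ i ∈ Finset.range N, b (q + l * s + i) • A ^ i) l =
      ∑ i ∈ Finset.range (l * s + N), b (q + i) • A ^ i := by
  induction l generalizing q with
  | zero => simp [zNest]
  | succ l ih =>
    have offset : q + (l + 1) * s = q + s + l * s := by ring
    have length : s + (l * s + N) = (l + 1) * s + N := by ring
    rw [zNest_succ_eq_add_sum_range, offset, ih, sum_range_smul_pow_mul_pow_add, length]

theorem z1ps_correct_general {p s t r N : ℕ} (hp : p = r + t * s)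
    {Y : Matrix (Fin n) (Fin n) R} (hY : Y = ∑ i ∈ Finset.range N, b (p + i) • A ^ i) :
    zNest A b p s Y t * A ^ r + ∑ j ∈ Finset.range r, b j • A ^ j
      = ∑ i ∈ Finset.range (p + N), b i • A ^ i := by
  subst hY hp
  rw [zNest_sum_range]
  simpa only [zero_add, add_assoc] using sum_range_smul_pow_mul_pow_add A b 0 r (t * s + N)

end zNest

/-- Let `m = 4s + p` with `s ≥ 2`, `p ≥ 0`, `t = ⌊p/s⌋`, `r = p mod s`.
If `Y = Σ_{i=0}^{4s} b_{p+i} A^i` (a correct inner evaluation of the top block), then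
the outer nesting scheme — `t` multiplications by `A^s` interleaved with the blocks
`Σ_{i=1}^{s} b_{p−ℓs−i} A^{s−i}`, a final multiplication by `A^r` (trivial when
`r = 0`), and the remainder block `Σ_{j=0}^{r−1} b_j A^j` — equals
`Σ_{i=0}^{m} b_i A^i`. -/
theorem z1ps_correct {R : Type*} [CommRing R] {n : ℕ}
    (A : Matrix (Fin n) (Fin n) R) (m s p : ℕ) (hs : 2 ≤ s) (hm : m = 4 * s + p)
    (b : ℕ → R) (Y : Matrix (Fin n) (Fin n) R)
    (hY : Y = ∑ i ∈ Finset.range (4 * s + 1), b (p + i) • A ^ i) :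
    zNest A b p s Y (p / s) * A ^ (p % s) +
        ∑ j ∈ Finset.range (p % s), b j • A ^ j
      = ∑ i ∈ Finset.range (m + 1), b i • A ^ i := by
  have hp : p = p % s + p / s * s := (Nat.mod_add_div' p s).symm
  have length : m + 1 = p + (4 * s + 1) := by omega
  rw [length, z1ps_correct_general A b hp hY]
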